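/- The subgroup H = ⟨σ, τ⟩ of GL(3,ℂ) is the internal direct product of S(2,1) and the cyclic group generated by diag(ζ₅, ζ₅, 1): these two subgroups of H commute elementwise, intersect trivially, and together generate H. Consequently H ≅ SL(2,5) × ℤ/5 and |H| = 600. -/

import Mathlib

noncomputable section
open Matrix

def zeta5 : ℂ := Complex.exp (2 * Real.pi * Complex.I / 5)

def sqrt5 : ℂ := zeta5 - zeta5 ^ 2 - zeta5 ^ 3 + zeta5 ^ 4

def alpha : Matrix (Fin 2) (Fin 2) ℂ := -(Matrix.of ![![zeta5 ^ 3, 0], ![0, zeta5 ^ 2]])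
def beta : Matrix (Fin 2) (Fin 2) ℂ := Matrix.of ![![0, 1], ![-1, 0]]
def gamma : Matrix (Fin 2) (Fin 2) ℂ :=
  (zeta5 ^ 2 - zeta5 ^ 3)⁻¹ •
    Matrix.of ![![zeta5 + zeta5⁻¹, 1], ![1, -(zeta5 + zeta5⁻¹)]]

/-- The block-diagonal embedding of a `2 × 2` matrix into `GL(3)`, with last diagonal entry 1. -/
def emb (A : Matrix (Fin 2) (Fin 2) ℂ) : Matrix (Fin 3) (Fin 3) ℂ :=
  Matrix.of ![![A 0 0, A 0 1, 0], ![A 1 0, A 1 1, 0], ![0, 0, 1]]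

def alpha' : Matrix (Fin 3) (Fin 3) ℂ := emb alpha
def beta' : Matrix (Fin 3) (Fin 3) ℂ := emb beta
def gamma' : Matrix (Fin 3) (Fin 3) ℂ := emb gamma

def sigma : Matrix (Fin 3) (Fin 3) ℂ :=
  Matrix.of ![![(zeta5 - zeta5 ^ 4) / sqrt5, (zeta5 ^ 3 - zeta5 ^ 2) / sqrt5, 0],
    ![(zeta5 ^ 3 - zeta5 ^ 2) / sqrt5, -((zeta5 - zeta5 ^ 4) / sqrt5), 0],
    ![0, 0, 1]]

def tau : Matrix (Fin 3) (Fin 3) ℂ := Matrix.diagonal ![zeta5, 1, 1]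

def rho : Matrix (Fin 3) (Fin 3) ℂ := Matrix.diagonal ![zeta5 ^ 3, zeta5 ^ 2, 1]

/-- The subgroup of `GL(3, ℂ)` generated by the invertible matrices in `S`. -/
def gen3 (S : Set (Matrix (Fin 3) (Fin 3) ℂ)) : Subgroup (GL (Fin 3) ℂ) :=
  Subgroup.closure {g : GL (Fin 3) ℂ | (g : Matrix (Fin 3) (Fin 3) ℂ) ∈ S}

/-- `S(2,1) = ⟨α', β', γ'⟩`. -/
def S21 : Subgroup (GL (Fin 3) ℂ) := gen3 {alpha', beta', gamma'}

abbrev SL25 := Matrix.SpecialLinearGroup (Fin 2) (ZMod 5)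

/-- `H = ⟨σ, τ⟩`. -/
def H : Subgroup (GL (Fin 3) ℂ) := gen3 {sigma, tau}

/-- The cyclic subgroup generated by `diag(ζ₅, ζ₅, 1)`. -/
def Dz : Subgroup (GL (Fin 3) ℂ) := gen3 {Matrix.diagonal ![zeta5, zeta5, 1]}

/-!
The group `SL₂(𝔽₅)` acts on the functions `𝔽₅ → ℂ` by the Weil representation, and the odd functions
form a faithful two-dimensional subrepresentation. In a suitable basis the Weyl element
`w = !![0, -1; 1, 0]` acts by the upper left block of `σ` and `u = !![1, 1; 0, 1]` by
`diag(ζ₅³, ζ₅²)`. Since `α, β, γ` are the images of generators of `SL₂(𝔽₅)` as well, `S(2,1)` is the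
image of this representation, bordered by `1`.

Put `δ = diag(ζ₅, ζ₅, 1)`, which commutes with `S(2,1)` and has order `5`. As `SL₂(𝔽₅)` is perfect,
`S(2,1)` has determinant `1`, whereas `det` is injective on `⟨δ⟩`; so the two subgroups meet
trivially. Finally `τ = ρ δ³` with `ρ` the image of `u`, and `(w u)⁶ = 1` gives
`(σ τ)⁶ = δ¹⁸ = δ³`, a generator of `⟨δ⟩`; so `⟨σ, τ⟩` contains `δ`, hence `ρ`, hence all of
`S(2,1)`.
-/

section QuadraticGaussSum

variable {F K : Type*} [Field F] [Fintype F] [DecidableEq F] [Field K]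

/-- The quadratic character of a finite field `F`, with values in an arbitrary field `K`. -/
abbrev quadraticCharTo (F K : Type*) [Field F] [Fintype F] [DecidableEq F] [Field K] :
    MulChar F K :=
  (quadraticChar F).ringHomComp (Int.castRingHom K)

theorem quadraticCharTo_ne_one [CharZero K] (hF : ringChar F ≠ 2) : quadraticCharTo F K ≠ 1 :=
  (MulChar.ringHomComp_ne_one_iff Int.cast_injective).mpr (quadraticChar_ne_one hF)

theorem quadraticCharTo_mul_self {a : F} (ha : a ≠ 0) :
    quadraticCharTo F K a * quadraticCharTo F K a = 1 := by
  rw [← map_mul, ← sq, MulChar.ringHomComp_apply, quadraticChar_sq_one' ha, map_one]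

theorem quadraticCharTo_inv (a : F) : quadraticCharTo F K a⁻¹ = quadraticCharTo F K a := by
  rcases eq_or_ne a 0 with rfl | ha
  · rw [_root_.inv_zero]
  · refine mul_right_cancel₀ (left_ne_zero_of_mul_eq_one (quadraticCharTo_mul_self ha)) ?_
    rw [quadraticCharTo_mul_self ha, ← map_mul, inv_mul_cancel₀ ha, map_one]

theorem gaussSum_quadraticCharTo_ne_zero [CharZero K] (hF : ringChar F ≠ 2) {ψ : AddChar F K}
    (hψ : ψ ≠ 1) : gaussSum (quadraticCharTo F K) ψ ≠ 0 :=
  gaussSum_ne_zero_of_nontrivial (Nat.cast_ne_zero.mpr Fintype.card_ne_zero)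
    (quadraticCharTo_ne_one hF) (AddChar.IsPrimitive.of_ne_one hψ)

theorem quadraticCharTo_neg_one_mul_gaussSum_sq [CharZero K] (hF : ringChar F ≠ 2)
    {ψ : AddChar F K} (hψ : ψ ≠ 1) :
    quadraticCharTo F K (-1) * gaussSum (quadraticCharTo F K) ψ ^ 2 = Fintype.card F := by
  rw [gaussSum_sq (quadraticCharTo_ne_one hF) ((quadraticChar_isQuadratic F).comp _)
    (AddChar.IsPrimitive.of_ne_one hψ), ← mul_assoc,
    quadraticCharTo_mul_self (neg_ne_zero.mpr one_ne_zero), one_mul]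

theorem sum_addChar_sq (hF : ringChar F ≠ 2) {ψ : AddChar F K} (hψ : ψ ≠ 1) :
    ∑ x, ψ (x ^ 2) = gaussSum (quadraticCharTo F K) ψ := by
  have card_sqrts (u : F) :
      (({x | x ^ 2 = u} : Finset F).card : K) = quadraticCharTo F K u + 1 := by
    have := quadraticChar_card_sqrts hF u
    rw [Set.toFinset_ofPred] at this
    simpa using congrArg (Int.cast : ℤ → K) this
  calc ∑ x, ψ (x ^ 2)
      = ∑ u, ∑ x with x ^ 2 = u, ψ (x ^ 2) := (Finset.sum_fiberwise _ _ _).symm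
    _ = ∑ u, (quadraticCharTo F K u + 1) * ψ u := by
        refine Finset.sum_congr rfl fun u _ => ?_
        rw [Finset.sum_congr rfl fun x hx => by rw [(Finset.mem_filter.mp hx).2],
          Finset.sum_const, nsmul_eq_mul, card_sqrts]
    _ = gaussSum (quadraticCharTo F K) ψ := by
        simp only [add_mul, one_mul, Finset.sum_add_distrib, AddChar.sum_eq_zero_of_ne_one hψ,
          add_zero, gaussSum]

theorem sum_addChar_mul {ψ : AddChar F K} (hψ : ψ ≠ 1) (b : F) :
    ∑ x, ψ (b * x) = if b = 0 then (Fintype.card F : K) else 0 := by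
  simpa only [mul_comm, Nat.cast_ite, Nat.cast_zero] using
    AddChar.sum_mulShift b (AddChar.IsPrimitive.of_ne_one hψ)

theorem sum_addChar_mul_sq (hF : ringChar F ≠ 2) {ψ : AddChar F K} (hψ : ψ ≠ 1) {a : F}
    (ha : a ≠ 0) :
    ∑ x, ψ (a * x ^ 2) = quadraticCharTo F K a * gaussSum (quadraticCharTo F K) ψ := by
  have hshift : ψ.mulShift a ≠ 1 := AddChar.IsPrimitive.of_ne_one hψ ha
  calc ∑ x, ψ (a * x ^ 2) = gaussSum (quadraticCharTo F K) (ψ.mulShift a) :=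
        sum_addChar_sq hF hshift
    _ = quadraticCharTo F K a * (quadraticCharTo F K a *
          gaussSum (quadraticCharTo F K) (ψ.mulShift a)) := by
        rw [← mul_assoc, quadraticCharTo_mul_self ha, one_mul]
    _ = quadraticCharTo F K a * gaussSum (quadraticCharTo F K) ψ := by
        rw [← gaussSum_mulShift _ ψ (Units.mk0 a ha), Units.val_mk0]

theorem sum_addChar_quadratic (hF : ringChar F ≠ 2) {ψ : AddChar F K} (hψ : ψ ≠ 1) {a : F}
    (ha : a ≠ 0) (b : F) :
    ∑ x, ψ (a * x ^ 2 - 2 * b * x) =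
      ψ (-(b ^ 2 / a)) * (quadraticCharTo F K a * gaussSum (quadraticCharTo F K) ψ) := by
  rw [← sum_addChar_mul_sq hF hψ ha, Finset.mul_sum, ← Equiv.sum_comp (Equiv.addRight (b / a))]
  refine Finset.sum_congr rfl fun x _ => ?_
  rw [← AddChar.map_add_eq_mul, Equiv.coe_addRight]
  congr 1
  field_simp
  ring

end QuadraticGaussSum

section SpecialLinearGroup

open scoped MatrixGroups

theorem SL2_det {R : Type*} [CommRing R] (g : SL(2, R)) :
    g 0 0 * g 1 1 - g 0 1 * g 1 0 = 1 := by
  rw [← det_fin_two, g.det_coe]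

theorem SL2_mul_apply {R : Type*} [CommRing R] (g h : SL(2, R)) (i j : Fin 2) :
    (g * h) i j = g i 0 * h 0 j + g i 1 * h 1 j :=
  (congrFun₂ (Matrix.SpecialLinearGroup.coe_mul g h) i j).trans
    (by rw [mul_apply, Fin.sum_univ_two])

theorem SL2_mul_apply_zero_zero_mul {R : Type*} [CommRing R] (g h : SL(2, R)) :
    (g * h) 0 0 * g 1 0 = g 0 0 * (g * h) 1 0 - h 1 0 := by
  rw [SL2_mul_apply, SL2_mul_apply]
  linear_combination -h 1 0 * SL2_det g

theorem SL2_mul_apply_one_one_mul {R : Type*} [CommRing R] (g h : SL(2, R)) :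
    (g * h) 1 1 * h 1 0 = h 1 1 * (g * h) 1 0 - g 1 0 := by
  rw [SL2_mul_apply, SL2_mul_apply]
  linear_combination -g 1 0 * SL2_det h

theorem SL2_mul_mul_apply_zero_one {R : Type*} [CommRing R] {g h : SL(2, R)}
    (hgh : (g * h) 1 0 = 0) :
    g 1 0 * h 1 0 * (g * h) 0 1 = -(g 0 0 * g 1 0 + h 1 1 * h 1 0) := by
  rw [SL2_mul_apply] at hgh ⊢
  linear_combination g 0 0 * h 1 1 * hgh - g 0 0 * g 1 0 * SL2_det h - h 1 1 * h 1 0 * SL2_det g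

end SpecialLinearGroup

section WeilRepresentation

open scoped MatrixGroups

variable {F K : Type*} [Field F] [Fintype F] [DecidableEq F] [Field K]

/-- The matrix by which `g ∈ SL₂(F)` acts in the Weil representation on the functions `F → K`
attached to the additive character `ψ`. The normalization is the one for which
`!![1, b; 0, 1]` multiplies by `ψ (b x²)` (rather than `ψ (b x² / 2)`). -/
def weilMatrix (ψ : AddChar F K) (g : SL(2, F)) : Matrix F F K := of fun x y =>
  if g 1 0 = 0 then
    if y = g 0 0 * x then quadraticCharTo F K (g 0 0) * ψ (g 0 0 * g 0 1 * x ^ 2) else 0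
  else
    quadraticCharTo F K (g 1 0) / gaussSum (quadraticCharTo F K) ψ *
      ψ ((g 0 0 * x ^ 2 - 2 * x * y + g 1 1 * y ^ 2) / g 1 0)

variable {ψ : AddChar F K} {g h : SL(2, F)}

theorem weilMatrix_apply_of_eq_zero (hg : g 1 0 = 0) (x y : F) :
    weilMatrix ψ g x y =
      if y = g 0 0 * x then quadraticCharTo F K (g 0 0) * ψ (g 0 0 * g 0 1 * x ^ 2) else 0 := by
  rw [weilMatrix, of_apply, if_pos hg]

theorem weilMatrix_apply_of_ne_zero (hg : g 1 0 ≠ 0) (x y : F) :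
    weilMatrix ψ g x y = quadraticCharTo F K (g 1 0) / gaussSum (quadraticCharTo F K) ψ *
      ψ ((g 0 0 * x ^ 2 - 2 * x * y + g 1 1 * y ^ 2) / g 1 0) := by
  rw [weilMatrix, of_apply, if_neg hg]

theorem weilMatrix_neg_neg (ψ : AddChar F K) (g : SL(2, F)) (x y : F) :
    weilMatrix ψ g (-x) (-y) = weilMatrix ψ g x y := by
  simp only [weilMatrix, of_apply, mul_neg, neg_inj, neg_mul, neg_neg, even_two.neg_pow]

theorem weilMatrix_one (ψ : AddChar F K) : weilMatrix ψ 1 = 1 := by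
  ext x y
  rw [weilMatrix_apply_of_eq_zero (by simp), one_apply]
  simp [eq_comm]

theorem weilMatrix_mul_of_left_eq_zero (ψ : AddChar F K) (hg : g 1 0 = 0) (h : SL(2, F)) :
    weilMatrix ψ (g * h) = weilMatrix ψ g * weilMatrix ψ h := by
  have hdet := SL2_det g
  rw [hg, mul_zero, sub_zero] at hdet
  have ha : g 0 0 ≠ 0 := left_ne_zero_of_mul_eq_one hdet
  have hd : g 1 1 = (g 0 0)⁻¹ := eq_inv_of_mul_eq_one_right hdet
  ext x y
  simp only [mul_apply, weilMatrix_apply_of_eq_zero hg, ite_mul, zero_mul, Finset.sum_ite_eq',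
    Finset.mem_univ, if_true]
  by_cases hh : h 1 0 = 0
  · have hdet' : h 0 0 * h 1 1 = 1 := by simpa [hh] using SL2_det h
    have hgh : (g * h) 1 0 = 0 := by simp [SL2_mul_apply, hg, hh]
    simp only [weilMatrix_apply_of_eq_zero hgh, weilMatrix_apply_of_eq_zero hh, SL2_mul_apply, hh,
      mul_zero, add_zero, map_mul, mul_ite, mul_left_comm (h 0 0), ← mul_assoc]
    refine if_congr Iff.rfl ?_ rfl
    rw [mul_right_comm _ (ψ _), mul_assoc _ (ψ _), ← AddChar.map_add_eq_mul]
    congr 2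
    linear_combination g 0 0 * g 0 1 * x ^ 2 * hdet'
  · have hgh : (g * h) 1 0 ≠ 0 := by
      rw [SL2_mul_apply, hg, zero_mul, zero_add, hd]
      exact mul_ne_zero (inv_ne_zero ha) hh
    simp only [weilMatrix_apply_of_ne_zero hgh, weilMatrix_apply_of_ne_zero hh, SL2_mul_apply, hg,
      hd, zero_mul, zero_add, map_mul, quadraticCharTo_inv]
    rw [mul_mul_mul_comm, ← AddChar.map_add_eq_mul, mul_div_assoc]
    congr 2
    field_simp
    ring

theorem weilMatrix_mul_of_right_eq_zero (ψ : AddChar F K) (hg : g 1 0 ≠ 0) (hh : h 1 0 = 0) :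
    weilMatrix ψ (g * h) = weilMatrix ψ g * weilMatrix ψ h := by
  have hdet := SL2_det h
  rw [hh, mul_zero, sub_zero] at hdet
  have ha : h 0 0 ≠ 0 := left_ne_zero_of_mul_eq_one hdet
  have hd : h 1 1 = (h 0 0)⁻¹ := eq_inv_of_mul_eq_one_right hdet
  have hgh : (g * h) 1 0 ≠ 0 := by
    rw [SL2_mul_apply, hh, mul_zero, add_zero]
    exact mul_ne_zero hg ha
  ext x y
  have hsolve (z : F) : y = h 0 0 * z ↔ z = (h 0 0)⁻¹ * y := by
    rw [eq_inv_mul_iff_mul_eq₀ ha, eq_comm]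
  simp only [mul_apply, weilMatrix_apply_of_eq_zero hh, hsolve, mul_ite, mul_zero,
    Finset.sum_ite_eq', Finset.mem_univ, if_true]
  simp only [weilMatrix_apply_of_ne_zero hgh, weilMatrix_apply_of_ne_zero hg, SL2_mul_apply, hh,
    hd, mul_zero, add_zero, map_mul]
  rw [mul_mul_mul_comm, ← AddChar.map_add_eq_mul, mul_div_right_comm]
  congr 2
  field_simp
  ring

theorem weilMatrix_mul_apply_of_ne_zero (ψ : AddChar F K) (hg : g 1 0 ≠ 0) (hh : h 1 0 ≠ 0)
    (x y : F) :
    (weilMatrix ψ g * weilMatrix ψ h) x y =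
      quadraticCharTo F K (g 1 0 * h 1 0) / gaussSum (quadraticCharTo F K) ψ ^ 2 *
        ψ (g 0 0 * x ^ 2 / g 1 0 + h 1 1 * y ^ 2 / h 1 0) *
        ∑ z, ψ ((g * h) 1 0 / (g 1 0 * h 1 0) * z ^ 2 - 2 * (x / g 1 0 + y / h 1 0) * z) := by
  rw [mul_apply, Finset.mul_sum]
  refine Finset.sum_congr rfl fun z _ => ?_
  rw [weilMatrix_apply_of_ne_zero hg, weilMatrix_apply_of_ne_zero hh, mul_mul_mul_comm,
    ← AddChar.map_add_eq_mul, mul_assoc _ (ψ _), ← AddChar.map_add_eq_mul, div_mul_div_comm,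
    ← map_mul, ← sq, SL2_mul_apply]
  congr 2
  field_simp
  ring

theorem weilMatrix_mul_of_ne_zero [CharZero K] (hF : ringChar F ≠ 2) (hψ : ψ ≠ 1)
    (hg : g 1 0 ≠ 0) (hh : h 1 0 ≠ 0) (hgh : (g * h) 1 0 ≠ 0) :
    weilMatrix ψ (g * h) = weilMatrix ψ g * weilMatrix ψ h := by
  have hG := gaussSum_quadraticCharTo_ne_zero (K := K) hF hψ
  have hcoeff : (g * h) 1 0 / (g 1 0 * h 1 0) ≠ 0 := div_ne_zero hgh (mul_ne_zero hg hh)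
  have hχ : quadraticCharTo F K ((g * h) 1 0) = quadraticCharTo F K (g 1 0 * h 1 0) *
      quadraticCharTo F K ((g * h) 1 0 / (g 1 0 * h 1 0)) := by
    rw [← map_mul, mul_div_cancel₀ _ (mul_ne_zero hg hh)]
  ext x y
  have hphase : ((g * h) 0 0 * x ^ 2 - 2 * x * y + (g * h) 1 1 * y ^ 2) / (g * h) 1 0 =
      g 0 0 * x ^ 2 / g 1 0 + h 1 1 * y ^ 2 / h 1 0 +
        -((x / g 1 0 + y / h 1 0) ^ 2 / ((g * h) 1 0 / (g 1 0 * h 1 0))) := by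
    field_simp
    linear_combination h 1 0 * x ^ 2 * SL2_mul_apply_zero_zero_mul g h +
      g 1 0 * y ^ 2 * SL2_mul_apply_one_one_mul g h
  rw [weilMatrix_mul_apply_of_ne_zero ψ hg hh, sum_addChar_quadratic hF hψ hcoeff,
    weilMatrix_apply_of_ne_zero hgh, hχ, hphase, AddChar.map_add_eq_mul]
  field_simp

theorem weilMatrix_mul_of_mul_eq_zero [CharZero K] (hF : ringChar F ≠ 2) (hψ : ψ ≠ 1)
    (hg : g 1 0 ≠ 0) (hh : h 1 0 ≠ 0) (hgh : (g * h) 1 0 = 0) :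
    weilMatrix ψ (g * h) = weilMatrix ψ g * weilMatrix ψ h := by
  have ha : (g * h) 0 0 = -h 1 0 / g 1 0 := by
    rw [eq_div_iff hg, SL2_mul_apply_zero_zero_mul, hgh, mul_zero, zero_sub]
  have hχ : quadraticCharTo F K (-h 1 0 / g 1 0) =
      quadraticCharTo F K (-1) * quadraticCharTo F K (g 1 0 * h 1 0) := by
    rw [div_eq_mul_inv, map_mul, quadraticCharTo_inv, ← map_mul, ← map_mul]
    congr 1
    ring
  ext x y
  have hkernel : -(2 * (x / g 1 0 + y / h 1 0)) = 0 ↔ y = -h 1 0 / g 1 0 * x := by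
    rw [neg_eq_zero, mul_eq_zero_iff_left (Ring.two_ne_zero hF)]
    field_simp
    grind
  have hsum : ∑ z, ψ (0 / (g 1 0 * h 1 0) * z ^ 2 - 2 * (x / g 1 0 + y / h 1 0) * z) =
      if y = -h 1 0 / g 1 0 * x then (Fintype.card F : K) else 0 := by
    rw [← if_congr hkernel rfl rfl, ← sum_addChar_mul hψ]
    refine Finset.sum_congr rfl fun z _ => ?_
    rw [zero_div, zero_mul, zero_sub, neg_mul]
  rw [weilMatrix_mul_apply_of_ne_zero ψ hg hh, weilMatrix_apply_of_eq_zero hgh, hgh, hsum, mul_ite,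
    mul_zero, ha, hχ]
  refine ite_congr rfl (fun hy => ?_) fun _ => rfl
  have hphase : g 0 0 * x ^ 2 / g 1 0 + h 1 1 * y ^ 2 / h 1 0 =
      -h 1 0 / g 1 0 * (g * h) 0 1 * x ^ 2 := by
    rw [hy]
    field_simp
    linear_combination x ^ 2 * SL2_mul_mul_apply_zero_one hgh
  rw [hphase, ← quadraticCharTo_neg_one_mul_gaussSum_sq hF hψ]
  have hG := gaussSum_quadraticCharTo_ne_zero (K := K) hF hψ
  field_simp

theorem weilMatrix_mul [CharZero K] (hF : ringChar F ≠ 2) (hψ : ψ ≠ 1) (g h : SL(2, F)) :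
    weilMatrix ψ (g * h) = weilMatrix ψ g * weilMatrix ψ h := by
  by_cases hg : g 1 0 = 0
  · exact weilMatrix_mul_of_left_eq_zero ψ hg h
  by_cases hh : h 1 0 = 0
  · exact weilMatrix_mul_of_right_eq_zero ψ hg hh
  by_cases hgh : (g * h) 1 0 = 0
  · exact weilMatrix_mul_of_mul_eq_zero hF hψ hg hh hgh
  · exact weilMatrix_mul_of_ne_zero hF hψ hg hh hgh

end WeilRepresentation

section HalfSystem

variable {F ι : Type*} [AddGroup F]

/-- A half-system in an additive group `F` (for a finite field of odd characteristic, a set of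
representatives of the nonzero elements up to sign): `F` is the disjoint union of `{0}`, the values
of `r` and the values of `-r`, each taken once. -/
def IsHalfSystem (r : ι → F) : Prop :=
  Function.Bijective fun o : Option (ι ⊕ ι) => o.elim 0 (Sum.elim r (-r))

namespace IsHalfSystem

variable {r : ι → F}

theorem ne_zero (hr : IsHalfSystem r) (i : ι) : r i ≠ 0 := fun h =>
  Option.some_ne_none (Sum.inl i : ι ⊕ ι) (hr.injective h)

theorem injective (hr : IsHalfSystem r) : Function.Injective r := fun i j h =>
  Sum.inl_injective (Option.some_injective _ (hr.1 (a₁ := some (.inl i)) (a₂ := some (.inl j)) h))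

theorem ne_neg (hr : IsHalfSystem r) (i j : ι) : r i ≠ -r j := fun h =>
  Sum.inl_ne_inr (Option.some_injective _ (hr.1 (a₁ := some (.inl i)) (a₂ := some (.inr j)) h))

theorem sum_eq [Fintype F] [Fintype ι] {M : Type*} [AddCommMonoid M] (hr : IsHalfSystem r)
    (f : F → M) : ∑ x, f x = f 0 + ∑ i, (f (r i) + f (-r i)) := by
  rw [← hr.sum_comp f, Fintype.sum_option, Fintype.sum_sum_type, Finset.sum_add_distrib]
  rfl

end IsHalfSystem

end HalfSystem

section OddBlock

variable {F K ι : Type*} [AddGroup F] [Ring K]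

/-- For a matrix `M` commuting with `x ↦ -x` on the index set, the matrix of `M` on the odd
functions on `F`, in the basis `δ_{r i} - δ_{-r i}` attached to a half-system `r`. -/
def oddBlock (r : ι → F) (M : Matrix F F K) : Matrix ι ι K :=
  of fun i j => M (r i) (r j) - M (r i) (-r j)

theorem oddBlock_apply (r : ι → F) (M : Matrix F F K) (i j : ι) :
    oddBlock r M i j = M (r i) (r j) - M (r i) (-r j) :=
  rfl

variable {r : ι → F}

theorem oddBlock_one [DecidableEq F] [DecidableEq ι] (hr : IsHalfSystem r) :
    oddBlock r (1 : Matrix F F K) = 1 := by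
  ext i j
  simp only [oddBlock_apply, one_apply, hr.injective.eq_iff, hr.ne_neg, if_false, sub_zero]

theorem oddBlock_mul [Fintype F] [Fintype ι] (hr : IsHalfSystem r) (M : Matrix F F K)
    {N : Matrix F F K} (hN : ∀ x y, N (-x) (-y) = N x y) :
    oddBlock r (M * N) = oddBlock r M * oddBlock r N := by
  have hN' (x y : F) : N (-x) y = N x (-y) := by rw [← hN x, neg_neg]
  ext i j
  simp only [oddBlock_apply, mul_apply, hr.sum_eq, hN, hN']
  have hzero : N 0 (-r j) = N 0 (r j) := by rw [← hN', neg_zero]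
  rw [hzero, add_sub_add_left_eq_sub, ← Finset.sum_sub_distrib]
  refine Finset.sum_congr rfl fun k _ => ?_
  noncomm_ring

end OddBlock

section OddWeilRepresentation

open scoped MatrixGroups

variable {F K ι : Type*} [Field F] [Fintype F] [DecidableEq F] [Field K] [CharZero K]
  {ψ : AddChar F K} {r : ι → F}

theorem oddBlock_weilMatrix_apply_ne_zero (hF : ringChar F ≠ 2) (hψ : Function.Injective ψ)
    (hr : IsHalfSystem r) {g : SL(2, F)} (hg : g 1 0 ≠ 0) (i j : ι) :
    oddBlock r (weilMatrix ψ g) i j ≠ 0 := by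
  rw [oddBlock_apply, weilMatrix_apply_of_ne_zero hg, weilMatrix_apply_of_ne_zero hg, ← mul_sub]
  refine mul_ne_zero (div_ne_zero ?_ (gaussSum_quadraticCharTo_ne_zero hF ?_))
    (sub_ne_zero.mpr (hψ.ne fun h => ?_))
  · exact left_ne_zero_of_mul_eq_one (quadraticCharTo_mul_self hg)
  · rintro rfl
    exact one_ne_zero (hψ (a₁ := (1 : F)) (a₂ := 0) rfl)
  · rw [div_left_inj' hg] at h
    have h4 : 2 * (2 * (r i * r j)) = 0 := by linear_combination -h
    have h2 := Ring.two_ne_zero hF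
    exact mul_ne_zero h2 (mul_ne_zero h2 (mul_ne_zero (hr.ne_zero i) (hr.ne_zero j))) h4

theorem apply_zero_zero_eq_one_of_oddBlock_weilMatrix (hF : ringChar F ≠ 2)
    (hneg : IsSquare (-1 : F)) (hψ : Function.Injective ψ) (hr : IsHalfSystem r) {g : SL(2, F)}
    (hg : g 1 0 = 0) {i : ι} (hi : oddBlock r (weilMatrix ψ g) i i = 1) : g 0 0 = 1 := by
  have hr0 := hr.ne_zero i
  have hχ : quadraticCharTo F K (-1) = 1 := by
    rw [MulChar.ringHomComp_apply,
      (quadraticChar_one_iff_isSquare (neg_ne_zero.mpr one_ne_zero)).mpr hneg, map_one]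
  rw [oddBlock_apply, weilMatrix_apply_of_eq_zero hg, weilMatrix_apply_of_eq_zero hg] at hi
  by_contra ha1
  have h1 : r i ≠ g 0 0 * r i := fun h => ha1 ((mul_eq_right₀ hr0).mp h.symm)
  have ha : g 0 0 = -1 := by
    by_contra ha
    have h2 : -r i ≠ g 0 0 * r i := fun h => ha (mul_right_cancel₀ hr0 (by rw [← h, neg_one_mul]))
    rw [if_neg h1, if_neg h2, sub_zero] at hi
    exact zero_ne_one hi
  rw [if_neg h1, ha, if_pos (neg_one_mul _).symm, hχ, zero_sub, one_mul] at hi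
  have hψ1 : ψ (-1 * g 0 1 * r i ^ 2) = -1 := by rw [← hi, neg_neg]
  have hzero : 2 * (-1 * g 0 1 * r i ^ 2) = 0 := by
    rw [← hψ.eq_iff' ψ.map_zero_eq_one, two_mul, AddChar.map_add_eq_mul, hψ1, neg_one_mul, neg_neg]
  rw [(mul_eq_zero_iff_left (Ring.two_ne_zero hF)).mp hzero, AddChar.map_zero_eq_one] at hψ1
  norm_num at hψ1

theorem eq_one_of_oddBlock_weilMatrix (hF : ringChar F ≠ 2)
    (hneg : IsSquare (-1 : F)) (hψ : Function.Injective ψ) (hr : IsHalfSystem r) {g : SL(2, F)}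
    (hg : g 1 0 = 0) {i : ι} (hi : oddBlock r (weilMatrix ψ g) i i = 1) : g = 1 := by
  have ha := apply_zero_zero_eq_one_of_oddBlock_weilMatrix hF hneg hψ hr hg hi
  have hd : g 1 1 = 1 := by
    simpa only [hg, ha, mul_zero, sub_zero, one_mul] using SL2_det g
  have hb : g 0 1 = 0 := by
    have hne : -r i ≠ 1 * r i := by
      rw [one_mul]
      exact (hr.ne_neg i i).symm
    rw [oddBlock_apply, weilMatrix_apply_of_eq_zero hg, weilMatrix_apply_of_eq_zero hg, ha,
      if_pos (one_mul _).symm, if_neg hne, map_one, one_mul, one_mul, sub_zero,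
      hψ.eq_iff' ψ.map_zero_eq_one] at hi
    exact (mul_eq_zero_iff_right (pow_ne_zero 2 (hr.ne_zero i))).mp hi
  ext k l
  fin_cases k <;> fin_cases l <;> simp [ha, hb, hg, hd]

variable [Fintype ι] [DecidableEq ι]

/-- The odd part of the Weil representation of `SL₂(F)`, of dimension `(|F| - 1) / 2`, in the basis
given by a half-system `r`. -/
def oddWeilRep (hF : ringChar F ≠ 2) (hψ : ψ ≠ 1) (hr : IsHalfSystem r) :
    SL(2, F) →* Matrix ι ι K where
  toFun g := oddBlock r (weilMatrix ψ g)
  map_one' := by rw [weilMatrix_one, oddBlock_one hr]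
  map_mul' g h := by rw [weilMatrix_mul hF hψ, oddBlock_mul hr _ (weilMatrix_neg_neg ψ h)]

theorem oddWeilRep_apply (hF : ringChar F ≠ 2) (hψ : ψ ≠ 1) (hr : IsHalfSystem r) (g : SL(2, F)) :
    oddWeilRep hF hψ hr g = oddBlock r (weilMatrix ψ g) :=
  rfl

theorem oddWeilRep_injective [Nontrivial ι] (hF : ringChar F ≠ 2) (hψ : ψ ≠ 1)
    (hr : IsHalfSystem r) (hneg : IsSquare (-1 : F)) (hψ' : Function.Injective ψ) :
    Function.Injective (oddWeilRep hF hψ hr) := by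
  rw [injective_iff_map_eq_one]
  intro g hg
  obtain ⟨i, j, hij⟩ := exists_pair_ne ι
  have hentry (k l : ι) : oddBlock r (weilMatrix ψ g) k l = (1 : Matrix ι ι K) k l :=
    congrFun₂ hg k l
  by_cases hc : g 1 0 = 0
  · exact eq_one_of_oddBlock_weilMatrix hF hneg hψ' hr hc
      ((hentry i i).trans (one_apply_eq i))
  · exact absurd ((hentry i j).trans (one_apply_ne hij))
      (oddBlock_weilMatrix_apply_ne_zero hF hψ' hr hc i j)

end OddWeilRepresentation

section Groups

theorem disjoint_ker_zpowers_of_orderOf_map_eq {G M : Type*} [Group G] [Group M] (f : G →* M)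
    {x : G} (hx : orderOf (f x) = orderOf x) : Disjoint f.ker (Subgroup.zpowers x) := by
  rw [Subgroup.disjoint_def]
  rintro _ hker ⟨k, rfl⟩
  rw [MonoidHom.mem_ker, map_zpow, ← orderOf_dvd_iff_zpow_eq_one, hx,
    orderOf_dvd_iff_zpow_eq_one] at hker
  exact hker

theorem range_le_ker_of_commutator_eq_top {G M A : Type*} [Group G] [Group M] [CommGroup A]
    (hG : commutator G = ⊤) (f : G →* M) (φ : M →* A) : f.range ≤ φ.ker := by
  rintro _ ⟨g, rfl⟩
  exact Abelianization.commutator_subset_ker (φ.comp f) (hG ▸ Subgroup.mem_top g)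

/-- The isomorphism from the product of two commuting subgroups with trivial intersection to the
subgroup they generate, i.e. the statement that the latter is their internal direct product. -/
def prodMulEquivSup {G : Type*} [Group G] {A B : Subgroup G} (hAB : Disjoint A B)
    (hcomm : ∀ a ∈ A, ∀ b ∈ B, a * b = b * a) : A × B ≃* ↥(A ⊔ B) :=
  have hcomm' (a : A) (b : B) : Commute (A.subtype a) (B.subtype b) := hcomm a a.2 b b.2
  (MonoidHom.ofInjective (f := A.subtype.noncommCoprod B.subtype hcomm')
    ((MonoidHom.noncommCoprod_injective _ _ hcomm').mpr
      ⟨A.subtype_injective, B.subtype_injective, by rwa [A.range_subtype, B.range_subtype]⟩)).trans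
    (MulEquiv.subgroupCongr (by
      rw [MonoidHom.noncommCoprod_range, A.range_subtype, B.range_subtype]))

theorem closure_pair_mul_pow_eq_sup_zpowers {G : Type*} [Group G] {s t d : G} {k m : ℕ}
    (hs : Commute d s) (ht : Commute d t) (hst : (s * t) ^ m = 1)
    (hkm : (k * m).Coprime (orderOf d)) :
    Subgroup.closure {s, t * d ^ k} = Subgroup.closure {s, t} ⊔ Subgroup.zpowers d := by
  apply le_antisymm
  · rw [Subgroup.closure_le, Set.pair_subset_iff]
    have hd : d ∈ Subgroup.closure {s, t} ⊔ Subgroup.zpowers d :=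
      Subgroup.mem_sup_right (Subgroup.mem_zpowers d)
    exact ⟨Subgroup.mem_sup_left (Subgroup.subset_closure (Set.mem_insert _ _)),
      mul_mem (Subgroup.mem_sup_left (Subgroup.subset_closure (Set.mem_insert_of_mem _ rfl)))
        (pow_mem hd k)⟩
  · have hs_mem : s ∈ Subgroup.closure {s, t * d ^ k} :=
      Subgroup.subset_closure (Set.mem_insert _ _)
    have htd_mem : t * d ^ k ∈ Subgroup.closure {s, t * d ^ k} :=
      Subgroup.subset_closure (Set.mem_insert_of_mem _ rfl)
    have hpow : (s * (t * d ^ k)) ^ m = d ^ (k * m) := by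
      rw [← mul_assoc, ((hs.mul_right ht).symm.pow_right k).mul_pow, hst, one_mul, pow_mul]
    have hd_mem : d ∈ Subgroup.closure {s, t * d ^ k} := by
      obtain ⟨l, hl⟩ := exists_pow_eq_self_of_coprime hkm
      have := pow_mem (pow_mem (mul_mem hs_mem htd_mem) m) l
      rwa [hpow, hl] at this
    have ht_mem : t ∈ Subgroup.closure {s, t * d ^ k} := by
      simpa only [mul_inv_cancel_right] using mul_mem htd_mem (inv_mem (pow_mem hd_mem k))
    rw [sup_le_iff, Subgroup.closure_le, Set.pair_subset_iff, Subgroup.zpowers_le]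
    exact ⟨⟨hs_mem, ht_mem⟩, hd_mem⟩

theorem closure_pair_le_closure_triple {G : Type*} [Group G] (s t d : G) (k : ℕ) :
    Subgroup.closure {s, t} ≤ Subgroup.closure {t * d ^ k, d, d * s} := by
  set K := Subgroup.closure {t * d ^ k, d, d * s}
  have htd : t * d ^ k ∈ K := Subgroup.subset_closure (Or.inl rfl)
  have hd : d ∈ K := Subgroup.subset_closure (Or.inr (Or.inl rfl))
  have hds : d * s ∈ K := Subgroup.subset_closure (Or.inr (Or.inr rfl))
  rw [Subgroup.closure_le, Set.pair_subset_iff]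
  exact ⟨(K.mul_mem_cancel_left hd).mp hds, (K.mul_mem_cancel_right (pow_mem hd k)).mp htd⟩

end Groups

section SpecialLinearGroupFinite

open scoped MatrixGroups

theorem card_specialLinearGroup_mul (n F : Type*) [Fintype n] [DecidableEq n] [Nonempty n] [Field F]
    [Fintype F] :
    Nat.card (SpecialLinearGroup n F) * (Fintype.card F - 1) = Nat.card (GL n F) := by
  have hrange : (SpecialLinearGroup.toGL : SpecialLinearGroup n F →* GL n F).range =
      (GeneralLinearGroup.det : GL n F →* Fˣ).ker := by
    ext g
    rw [MonoidHom.mem_ker, Units.ext_iff, GeneralLinearGroup.val_det_apply, Units.val_one]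
    exact ⟨fun ⟨A, hA⟩ => hA ▸ A.det_coe, fun hg => ⟨⟨g, hg⟩, Units.ext rfl⟩⟩
  rw [← (GeneralLinearGroup.det : GL n F →* Fˣ).ker.card_mul_index, Subgroup.index_ker,
    MonoidHom.range_eq_top.mpr GeneralLinearGroup.det_surjective, Subgroup.card_top,
    Nat.card_units, Nat.card_eq_fintype_card (α := F), ← hrange,
    Nat.card_congr (MonoidHom.ofInjective SpecialLinearGroup.toGL_injective).toEquiv]

/-- The Weyl element of `SL₂`, which together with the upper unitriangular matrices generates
`SL₂` over a field. -/
def weylElement (R : Type*) [CommRing R] : SL(2, R) :=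
  ⟨!![0, -1; 1, 0], by rw [det_fin_two_of]; ring⟩

theorem coe_weylElement (R : Type*) [CommRing R] :
    (weylElement R : Matrix (Fin 2) (Fin 2) R) = !![0, -1; 1, 0] :=
  rfl

theorem weylElement_mul_transvection {R : Type*} [CommRing R] (c : R) :
    weylElement R * SpecialLinearGroup.transvection zero_ne_one (-c) =
      SpecialLinearGroup.transvection one_ne_zero c * weylElement R := by
  ext i j
  fin_cases i <;> fin_cases j <;>
    simp [SpecialLinearGroup.transvection_coe, coe_weylElement, SL2_mul_apply]

theorem weylElement_mul_transvection_one_pow_six (R : Type*) [CommRing R] :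
    (weylElement R * SpecialLinearGroup.transvection zero_ne_one 1) ^ 6 = 1 := by
  have hcube : (weylElement R * SpecialLinearGroup.transvection zero_ne_one 1) ^ 3 = -1 := by
    ext i j
    fin_cases i <;> fin_cases j <;>
      simp [pow_succ, SpecialLinearGroup.transvection_coe, coe_weylElement, SL2_mul_apply]
  rw [pow_mul _ 3 2, hcube, neg_one_sq]

theorem closure_weylElement_transvection_eq_top (p : ℕ) [Fact p.Prime] :
    Subgroup.closure {weylElement (ZMod p), SpecialLinearGroup.transvection zero_ne_one 1} = ⊤ := by
  set K := Subgroup.closure {weylElement (ZMod p), SpecialLinearGroup.transvection zero_ne_one 1}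
  have hS : weylElement (ZMod p) ∈ K := Subgroup.subset_closure (Set.mem_insert _ _)
  have hT : SpecialLinearGroup.transvection zero_ne_one 1 ∈ K :=
    Subgroup.subset_closure (Set.mem_insert_of_mem _ rfl)
  have hupper (b : ZMod p) : SpecialLinearGroup.transvection zero_ne_one b ∈ K := by
    rw [← ZMod.natCast_zmod_val b]
    induction b.val with
    | zero =>
      rw [Nat.cast_zero, SpecialLinearGroup.transvection_coeff_zero]
      exact one_mem K
    | succ n ih =>
      rw [Nat.cast_succ, SpecialLinearGroup.transvection_add]
      exact mul_mem ih hT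
  have hlower (c : ZMod p) : SpecialLinearGroup.transvection one_ne_zero c ∈ K := by
    rw [← Subgroup.mul_mem_cancel_right K hS, ← weylElement_mul_transvection]
    exact mul_mem hS (hupper (-c))
  rw [Subgroup.eq_top_iff']
  refine SL2.transvection_induction _ (fun i j hij c => ?_) fun _ _ => mul_mem
  fin_cases i <;> fin_cases j
  exacts [absurd rfl hij, hupper c, hlower c, absurd rfl hij]

end SpecialLinearGroupFinite

section OddWeilGenerators

open scoped MatrixGroups

variable {F K ι : Type*} [Field F] [Fintype F] [DecidableEq F] [Field K] [CharZero K]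
  [Fintype ι] [DecidableEq ι] {ψ : AddChar F K} {r : ι → F}
  (hF : ringChar F ≠ 2) (hψ : ψ ≠ 1) (hr : IsHalfSystem r)

theorem oddWeilRep_weylElement :
    oddWeilRep hF hψ hr (weylElement F) = of fun i j =>
      (ψ (-(2 * r i * r j)) - ψ (2 * r i * r j)) / gaussSum (quadraticCharTo F K) ψ := by
  have h10 : weylElement F 1 0 ≠ 0 := one_ne_zero
  ext i j
  rw [oddWeilRep_apply, oddBlock_apply, weilMatrix_apply_of_ne_zero h10,
    weilMatrix_apply_of_ne_zero h10]
  simp only [coe_weylElement, of_apply, cons_val', cons_val_zero, cons_val_one, cons_val_fin_one,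
    map_one, div_one, zero_mul, zero_sub, add_zero, mul_neg, sub_neg_eq_add, zero_add]
  rw [← mul_sub, one_div_mul_eq_div]

theorem oddWeilRep_transvection (b : F) :
    oddWeilRep hF hψ hr (SpecialLinearGroup.transvection zero_ne_one b) =
      diagonal fun i => ψ (b * r i ^ 2) := by
  have h10 : (SpecialLinearGroup.transvection zero_ne_one b : SL(2, F)) 1 0 = 0 := by
    simp [SpecialLinearGroup.transvection_coe]
  ext i j
  rw [oddWeilRep_apply, oddBlock_apply, weilMatrix_apply_of_eq_zero h10,
    weilMatrix_apply_of_eq_zero h10]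
  simp [SpecialLinearGroup.transvection_coe, diagonal_apply, hr.injective.eq_iff,
    (hr.ne_neg _ _).symm, eq_comm]

theorem oddWeilRep_diag2 {a : F} (ha : a ≠ 0) :
    oddWeilRep hF hψ hr (SpecialLinearGroup.diag2 a ha) = of fun i j => quadraticCharTo F K a *
      ((if r j = a * r i then 1 else 0) - (if -r j = a * r i then 1 else 0)) := by
  have h10 : (SpecialLinearGroup.diag2 a ha : SL(2, F)) 1 0 = 0 := by
    simp [SpecialLinearGroup.diag2_coe']
  ext i j
  rw [oddWeilRep_apply, oddBlock_apply, weilMatrix_apply_of_eq_zero h10,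
    weilMatrix_apply_of_eq_zero h10]
  simp [SpecialLinearGroup.diag2_coe', mul_sub]

end OddWeilGenerators

section AdditiveCharacter

theorem zmodChar_injective {R : Type*} [CommMonoid R] {n : ℕ} [NeZero n] {ζ : R}
    (hζ : IsPrimitiveRoot ζ n) : Function.Injective (AddChar.zmodChar n hζ.pow_eq_one) := by
  intro a b hab
  rw [AddChar.zmodChar_apply, AddChar.zmodChar_apply] at hab
  exact ZMod.val_injective n (hζ.pow_inj a.val_lt b.val_lt hab)

end AdditiveCharacter

section FifthRootOfUnity

theorem isPrimitiveRoot_zeta5 : IsPrimitiveRoot zeta5 5 :=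
  Complex.isPrimitiveRoot_exp 5 (by norm_num)

theorem zeta5_pow_five : zeta5 ^ 5 = 1 :=
  isPrimitiveRoot_zeta5.pow_eq_one

theorem sum_zeta5_pow : 1 + zeta5 + zeta5 ^ 2 + zeta5 ^ 3 + zeta5 ^ 4 = 0 := by
  simpa [Fin.sum_univ_five, Finset.sum_range_succ] using
    isPrimitiveRoot_zeta5.geom_sum_eq_zero (by norm_num)

theorem zeta5_inv : zeta5⁻¹ = zeta5 ^ 4 :=
  inv_eq_of_mul_eq_one_right (by rw [← zeta5_pow_five]; ring)

end FifthRootOfUnity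

section SL25

local instance fact_prime_five : Fact (Nat.Prime 5) := ⟨Nat.prime_five⟩

theorem isPrimitiveRoot_zeta5_cubed : IsPrimitiveRoot (zeta5 ^ 3) 5 :=
  isPrimitiveRoot_zeta5.pow_of_coprime 3 (by norm_num)

/-- The additive character `a ↦ ζ₅^(3a)` of `𝔽₅`; the exponent `3 = 1/2` compensates the
normalization of `weilMatrix`. -/
def psi5 : AddChar (ZMod 5) ℂ :=
  AddChar.zmodChar 5 isPrimitiveRoot_zeta5_cubed.pow_eq_one

theorem psi5_apply (a : ZMod 5) : psi5 a = ![1, zeta5 ^ 3, zeta5, zeta5 ^ 4, zeta5 ^ 2] a := by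
  have h5 := zeta5_pow_five
  rw [psi5, AddChar.zmodChar_apply]
  fin_cases a
  · exact pow_zero _
  · exact pow_one _
  · change (zeta5 ^ 3) ^ 2 = zeta5
    linear_combination zeta5 * h5
  · change (zeta5 ^ 3) ^ 3 = zeta5 ^ 4
    linear_combination zeta5 ^ 4 * h5
  · change (zeta5 ^ 3) ^ 4 = zeta5 ^ 2
    linear_combination zeta5 ^ 2 * (zeta5 ^ 5 + 1) * h5

theorem psi5_injective : Function.Injective psi5 :=
  zmodChar_injective isPrimitiveRoot_zeta5_cubed

theorem psi5_ne_one : psi5 ≠ 1 := by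
  intro h
  exact absurd (@psi5_injective 1 0 (by rw [h]; rfl)) (by decide)

theorem ringChar_zmod5_ne_two : ringChar (ZMod 5) ≠ 2 := by
  rw [ZMod.ringChar_zmod_n]
  decide

-- Representing `{±2}` by `3` rather than `2` makes `sl25Rep₂` hit the blocks of `sigma` and `beta`
-- exactly; with `2` it would do so only up to conjugation by `diag(1, -1)`.
theorem isHalfSystem_one_three : IsHalfSystem (![1, 3] : Fin 2 → ZMod 5) := by
  unfold IsHalfSystem
  decide

theorem gaussSum_psi5 : gaussSum (quadraticCharTo (ZMod 5) ℂ) psi5 = -sqrt5 := by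
  rw [← sum_addChar_sq ringChar_zmod5_ne_two psi5_ne_one]
  have hsum : ∑ x, psi5 (x ^ 2) = 1 + zeta5 ^ 3 + zeta5 ^ 2 + zeta5 ^ 2 + zeta5 ^ 3 := by
    simp only [psi5_apply]
    exact Fin.sum_univ_five _
  rw [hsum, sqrt5]
  linear_combination sum_zeta5_pow

theorem sqrt5_ne_zero : sqrt5 ≠ 0 :=
  neg_ne_zero.mp (gaussSum_psi5 ▸
    gaussSum_quadraticCharTo_ne_zero ringChar_zmod5_ne_two psi5_ne_one)

/-- The two-dimensional odd Weil representation of `SL₂(𝔽₅)`. -/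
def sl25Rep₂ : SL25 →* Matrix (Fin 2) (Fin 2) ℂ :=
  oddWeilRep ringChar_zmod5_ne_two psi5_ne_one isHalfSystem_one_three

theorem sl25Rep₂_injective : Function.Injective sl25Rep₂ :=
  oddWeilRep_injective _ _ _ (by decide) psi5_injective

theorem two_ne_zero_zmod5 : (2 : ZMod 5) ≠ 0 := by decide

theorem sl25Rep₂_weylElement : sl25Rep₂ (weylElement (ZMod 5)) =
    of ![![(zeta5 - zeta5 ^ 4) / sqrt5, (zeta5 ^ 3 - zeta5 ^ 2) / sqrt5],
      ![(zeta5 ^ 3 - zeta5 ^ 2) / sqrt5, -((zeta5 - zeta5 ^ 4) / sqrt5)]] := by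
  rw [sl25Rep₂, oddWeilRep_weylElement, gaussSum_psi5]
  ext i j
  simp only [psi5_apply, of_apply, div_neg, ← neg_div, neg_sub]
  fin_cases i <;> fin_cases j <;> rfl

theorem sl25Rep₂_transvection :
    sl25Rep₂ (SpecialLinearGroup.transvection zero_ne_one 1) =
      diagonal ![zeta5 ^ 3, zeta5 ^ 2] := by
  rw [sl25Rep₂, oddWeilRep_transvection]
  congr 1
  ext i
  rw [psi5_apply]
  fin_cases i <;> rfl

theorem sl25Rep₂_diag2 :
    sl25Rep₂ (SpecialLinearGroup.diag2 2 two_ne_zero_zmod5) = beta := by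
  rw [sl25Rep₂, oddWeilRep_diag2]
  have hχ : quadraticCharTo (ZMod 5) ℂ 2 = -1 := by
    have h : quadraticChar (ZMod 5) 2 = -1 := by decide
    rw [MulChar.ringHomComp_apply, h, map_neg, map_one]
  ext i j
  rw [of_apply, hχ]
  fin_cases i <;> fin_cases j
  · change (-1 : ℂ) * (0 - 0) = 0
    norm_num
  · change (-1 : ℂ) * (0 - 1) = 1
    norm_num
  · change (-1 : ℂ) * (1 - 0) = -1
    norm_num
  · change (-1 : ℂ) * (0 - 0) = 0
    norm_num

end SL25

section BlockEmbedding

theorem emb_one : emb 1 = 1 := by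
  ext i j
  fin_cases i <;> fin_cases j <;> simp [emb]

theorem emb_mul (A B : Matrix (Fin 2) (Fin 2) ℂ) : emb (A * B) = emb A * emb B := by
  ext i j
  fin_cases i <;> fin_cases j <;> simp [emb, mul_apply, Fin.sum_univ_succ]

theorem emb_injective : Function.Injective emb := by
  intro A B h
  ext i j
  fin_cases i <;> fin_cases j
  · exact congrFun₂ h 0 0
  · exact congrFun₂ h 0 1
  · exact congrFun₂ h 1 0
  · exact congrFun₂ h 1 1

theorem emb_diagonal (d : Fin 2 → ℂ) : emb (diagonal d) = diagonal ![d 0, d 1, 1] := by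
  ext i j
  fin_cases i <;> fin_cases j <;> simp [emb]

theorem emb_commute_diagonal (A : Matrix (Fin 2) (Fin 2) ℂ) (z w : ℂ) :
    Commute (diagonal ![z, z, w]) (emb A) := by
  ext i j
  fin_cases i <;> fin_cases j <;> simp [emb, mul_comm]

/-- The block-diagonal embedding `emb` as a monoid homomorphism. -/
def embHom : Matrix (Fin 2) (Fin 2) ℂ →* Matrix (Fin 3) (Fin 3) ℂ where
  toFun := emb
  map_one' := emb_one
  map_mul' := emb_mul

theorem gen3_image_val (s : Set (GL (Fin 3) ℂ)) :
    gen3 (Units.val '' s) = Subgroup.closure s :=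
  congrArg Subgroup.closure (Units.val_injective.preimage_image s)

end BlockEmbedding

section ThreeDimensional

attribute [local instance] fact_prime_five

/-- The representation `sl25Rep₂` followed by the block-diagonal embedding into `GL₃(ℂ)`. -/
def sl25Rep₃ : SL25 →* GL (Fin 3) ℂ :=
  (embHom.comp sl25Rep₂).toHomUnits

theorem coe_sl25Rep₃ (g : SL25) : (sl25Rep₃ g : Matrix (Fin 3) (Fin 3) ℂ) = emb (sl25Rep₂ g) :=
  rfl

theorem sl25Rep₃_injective : Function.Injective sl25Rep₃ := fun _ _ h =>
  sl25Rep₂_injective (emb_injective (congrArg Units.val h))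

theorem coe_sl25Rep₃_weylElement :
    (sl25Rep₃ (weylElement (ZMod 5)) : Matrix (Fin 3) (Fin 3) ℂ) = sigma := by
  rw [coe_sl25Rep₃, sl25Rep₂_weylElement]
  rfl

theorem coe_sl25Rep₃_transvection :
    (sl25Rep₃ (SpecialLinearGroup.transvection zero_ne_one 1) : Matrix (Fin 3) (Fin 3) ℂ) =
      rho := by
  rw [coe_sl25Rep₃, sl25Rep₂_transvection, emb_diagonal]
  rfl

theorem coe_sl25Rep₃_diag2 :
    (sl25Rep₃ (SpecialLinearGroup.diag2 2 two_ne_zero_zmod5) : Matrix (Fin 3) (Fin 3) ℂ) =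
      beta' := by
  rw [coe_sl25Rep₃, sl25Rep₂_diag2]
  rfl

theorem coe_sl25Rep₃_transvection_mul_diag2_sq :
    (sl25Rep₃ (SpecialLinearGroup.transvection zero_ne_one 1 *
      SpecialLinearGroup.diag2 2 two_ne_zero_zmod5 ^ 2) : Matrix (Fin 3) (Fin 3) ℂ) = alpha' := by
  rw [coe_sl25Rep₃, map_mul, map_pow, sl25Rep₂_transvection, sl25Rep₂_diag2, alpha']
  congr 1
  ext i j
  fin_cases i <;> fin_cases j <;> simp [alpha, beta, sq]

theorem coe_sl25Rep₃_diag2_mul_weylElement :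
    (sl25Rep₃ (SpecialLinearGroup.diag2 2 two_ne_zero_zmod5 * weylElement (ZMod 5)) :
      Matrix (Fin 3) (Fin 3) ℂ) = gamma' := by
  rw [coe_sl25Rep₃, map_mul, sl25Rep₂_diag2, sl25Rep₂_weylElement, gamma']
  congr 1
  have hne : zeta5 ^ 2 - zeta5 ^ 3 ≠ 0 := fun h => absurd
    (isPrimitiveRoot_zeta5.pow_inj (by norm_num) (by norm_num) (sub_eq_zero.mp h)) (by decide)
  have hdiag : (zeta5 ^ 3 - zeta5 ^ 2) / sqrt5 =
      (zeta5 ^ 2 - zeta5 ^ 3)⁻¹ * (zeta5 + zeta5⁻¹) := by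
    rw [inv_mul_eq_div, div_eq_div_iff sqrt5_ne_zero hne, zeta5_inv, sqrt5]
    linear_combination (zeta5 ^ 2 - zeta5 ^ 3) * zeta5_pow_five
  have hoff : (zeta5 - zeta5 ^ 4) / sqrt5 = -(zeta5 ^ 2 - zeta5 ^ 3)⁻¹ := by
    rw [← one_div, ← neg_div, div_eq_div_iff sqrt5_ne_zero hne, sqrt5]
    linear_combination (zeta5 ^ 2 - zeta5) * zeta5_pow_five
  rw [hdiag, hoff]
  ext i j
  fin_cases i <;> fin_cases j <;> simp [beta, gamma, ← mul_neg, -mul_eq_mul_left_iff, add_comm]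

theorem closure_mul_diag2_sq_diag2_diag2_mul_eq_top :
    Subgroup.closure {SpecialLinearGroup.transvection zero_ne_one 1 *
        SpecialLinearGroup.diag2 2 two_ne_zero_zmod5 ^ 2,
      SpecialLinearGroup.diag2 2 two_ne_zero_zmod5,
      SpecialLinearGroup.diag2 2 two_ne_zero_zmod5 * weylElement (ZMod 5)} = ⊤ := by
  rw [eq_top_iff, ← closure_weylElement_transvection_eq_top 5]
  exact closure_pair_le_closure_triple _ _ _ 2

theorem S21_eq_range : S21 = sl25Rep₃.range := by
  rw [MonoidHom.range_eq_map, ← closure_mul_diag2_sq_diag2_diag2_mul_eq_top, MonoidHom.map_closure,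
    ← gen3_image_val, Set.image_image]
  simp only [Set.image_insert_eq, Set.image_singleton, coe_sl25Rep₃_transvection_mul_diag2_sq,
    coe_sl25Rep₃_diag2, coe_sl25Rep₃_diag2_mul_weylElement]
  rfl

/-- The element `diag(ζ₅, ζ₅, 1)` of `GL₃(ℂ)`. -/
def dzGenerator : GL (Fin 3) ℂ :=
  GeneralLinearGroup.mkOfDetNeZero (diagonal ![zeta5, zeta5, 1]) (by
    simp [Fin.prod_univ_three, isPrimitiveRoot_zeta5.ne_zero])

theorem Dz_eq_zpowers : Dz = Subgroup.zpowers dzGenerator := by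
  rw [Subgroup.zpowers_eq_closure, ← gen3_image_val, Set.image_singleton]
  rfl

theorem dzGenerator_pow (k : ℕ) :
    (↑(dzGenerator ^ k) : Matrix (Fin 3) (Fin 3) ℂ) = diagonal ![zeta5 ^ k, zeta5 ^ k, 1] := by
  rw [Units.val_pow_eq_pow_val]
  refine (diagonal_pow _ k).trans (congrArg diagonal ?_)
  ext i
  fin_cases i <;> simp

theorem orderOf_det_dzGenerator : orderOf (GeneralLinearGroup.det dzGenerator) = 5 := by
  have hdet : (GeneralLinearGroup.det dzGenerator : ℂ) = zeta5 ^ 2 :=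
    det_diagonal.trans (by simp [Fin.prod_univ_three, sq])
  rw [← orderOf_units, hdet]
  exact (isPrimitiveRoot_zeta5.pow_of_coprime 2 (by norm_num)).eq_orderOf.symm

theorem orderOf_dzGenerator : orderOf dzGenerator = 5 := by
  refine Nat.dvd_antisymm (orderOf_dvd_of_pow_eq_one (Units.ext ?_))
    (orderOf_det_dzGenerator ▸ orderOf_map_dvd GeneralLinearGroup.det dzGenerator)
  rw [dzGenerator_pow, zeta5_pow_five, Units.val_one, ← diagonal_one]
  congr 1
  ext i
  fin_cases i <;> rfl

theorem dzGenerator_commute (g : SL25) : Commute dzGenerator (sl25Rep₃ g) :=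
  Units.ext (emb_commute_diagonal (sl25Rep₂ g) zeta5 1)

theorem commutator_SL25 : commutator SL25 = ⊤ :=
  SL2.commutator_eq_top two_ne_zero_zmod5 (by decide)

theorem disjoint_S21_Dz : Disjoint S21 Dz := by
  rw [S21_eq_range, Dz_eq_zpowers]
  exact (disjoint_ker_zpowers_of_orderOf_map_eq GeneralLinearGroup.det
    (orderOf_det_dzGenerator.trans orderOf_dzGenerator.symm)).mono_left
    (range_le_ker_of_commutator_eq_top commutator_SL25 _ _)

theorem commute_S21_Dz : ∀ a ∈ S21, ∀ b ∈ Dz, a * b = b * a := by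
  rw [S21_eq_range, Dz_eq_zpowers]
  rintro _ ⟨g, rfl⟩ _ ⟨k, rfl⟩
  exact ((dzGenerator_commute g).zpow_left k).eq.symm

theorem S21_sup_Dz : S21 ⊔ Dz = H := by
  have htau : (sl25Rep₃ (SpecialLinearGroup.transvection zero_ne_one 1) * dzGenerator ^ 3 :
      GL (Fin 3) ℂ) = tau := by
    rw [Units.val_mul, coe_sl25Rep₃_transvection, dzGenerator_pow, rho, tau, diagonal_mul_diagonal]
    congr 1
    ext i
    fin_cases i
    · change zeta5 ^ 3 * zeta5 ^ 3 = zeta5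
      linear_combination zeta5 * zeta5_pow_five
    · change zeta5 ^ 2 * zeta5 ^ 3 = 1
      linear_combination zeta5_pow_five
    · exact one_mul 1
  have hH : H = Subgroup.closure {sl25Rep₃ (weylElement (ZMod 5)),
      sl25Rep₃ (SpecialLinearGroup.transvection zero_ne_one 1) * dzGenerator ^ 3} := by
    rw [← gen3_image_val, Set.image_pair, htau, coe_sl25Rep₃_weylElement]
    rfl
  have hpow : (sl25Rep₃ (weylElement (ZMod 5)) *
      sl25Rep₃ (SpecialLinearGroup.transvection zero_ne_one 1)) ^ 6 = 1 := by
    rw [← map_mul, ← map_pow, weylElement_mul_transvection_one_pow_six, map_one]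
  rw [hH, closure_pair_mul_pow_eq_sup_zpowers (dzGenerator_commute _) (dzGenerator_commute _) hpow
    (by rw [orderOf_dzGenerator]; norm_num), ← Set.image_pair, ← MonoidHom.map_closure,
    closure_weylElement_transvection_eq_top, ← MonoidHom.range_eq_map, S21_eq_range, Dz_eq_zpowers]

theorem card_SL25 : Nat.card SL25 = 120 := by
  have h := card_specialLinearGroup_mul (Fin 2) (ZMod 5)
  rw [card_GL_field] at h
  rw [Fin.prod_univ_two, ZMod.card] at h
  exact Nat.eq_of_mul_eq_mul_right (k := 120) (by norm_num : 0 < 5 - 1) h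

theorem card_Dz : Nat.card Dz = 5 := by
  rw [Dz_eq_zpowers, Nat.card_zpowers, orderOf_dzGenerator]

theorem nonempty_mulEquiv_H : Nonempty (H ≃* SL25 × Multiplicative (ZMod 5)) := by
  have eS21 : SL25 ≃* S21 :=
    (MonoidHom.ofInjective sl25Rep₃_injective).trans (MulEquiv.subgroupCongr S21_eq_range.symm)
  have eDz : Multiplicative (ZMod 5) ≃* Dz :=
    mulEquivOfPrimeCardEq (p := 5) (Nat.card_zmod 5) card_Dz
  exact ⟨((eS21.prodCongr eDz).trans ((prodMulEquivSup disjoint_S21_Dz commute_S21_Dz).trans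
    (MulEquiv.subgroupCongr S21_sup_Dz))).symm⟩

end ThreeDimensional

theorem stmt10 :
    (∀ a ∈ S21, ∀ b ∈ Dz, a * b = b * a) ∧
    S21 ⊓ Dz = ⊥ ∧
    S21 ⊔ Dz = H ∧
    Nonempty (H ≃* SL25 × Multiplicative (ZMod 5)) ∧
    Nat.card H = 600 := by
  obtain ⟨e⟩ := nonempty_mulEquiv_H
  refine ⟨commute_S21_Dz, disjoint_iff.mp disjoint_S21_Dz, S21_sup_Dz, ⟨e⟩, ?_⟩
  rw [Nat.card_congr e.toEquiv, Nat.card_prod, card_SL25]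
  exact congrArg (120 * ·) (Nat.card_zmod 5)
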